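/- Let f ∈ K(3/5). Then for all z ∈ 𝔻 \ {0}, |Im(f(z)/z)| < 5(2^{1/5} − 1); that is, M(3/5) = sup_{0<θ<π} Im(e^{−iθ} k_{3/5}(e^{iθ})) < 5(2^{1/5} − 1) = −k_{3/5}(−1), and hence the imaginary part of f(z)/z is bounded by this constant. -/

import Mathlib

/-- The unit disk `{z : ℂ | |z| < 1}`. -/
noncomputable def unitDisk : Set ℂ := Metric.ball 0 1

/-- The extremal convex function of order `α`:
`k_α(z) = ((1-z)^(2α-1) - 1)/(1-2α)` (so that `k_α(0)=0`, `k_α'(0)=1`),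
with `k_{1/2}(z) = -log(1-z)` (principal branches). -/
noncomputable def kfun (α : ℝ) (z : ℂ) : ℂ :=
  if α = 1 / 2 then -Complex.log (1 - z)
  else ((1 - z) ^ ((2 * α - 1 : ℝ) : ℂ) - 1) / ((1 - 2 * α : ℝ) : ℂ)

/-- `h_α(z) = k_α(z)/z` for `z ≠ 0`, `h_α(0) = 1`. -/
noncomputable def hfun (α : ℝ) (z : ℂ) : ℂ :=
  if z = 0 then 1 else kfun α z / z

/-- `f ∈ K(α)`: `f` is analytic on the unit disk, normalized by `f(0)=0`, `f'(0)=1`,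
with nonvanishing derivative and `Re(1 + z f''(z)/f'(z)) > α` on the disk. -/
def IsConvexOfOrder (α : ℝ) (f : ℂ → ℂ) : Prop :=
  DifferentiableOn ℂ f unitDisk ∧ f 0 = 0 ∧ deriv f 0 = 1 ∧
    ∀ z ∈ unitDisk, deriv f z ≠ 0 ∧
      α < (1 + z * deriv (deriv f) z / deriv f z).re

/-!
For `1/2 ≤ α < 1`, Jack's lemma shows that `f ∈ K(α)` makes `f'` subordinate to
`k_α'(z) = (1 - z) ^ (-(2 - 2α))`. This function is convex univalent, since it carries the disk onto
the image of the half-plane `Re w > 1/2` under a power with exponent `2 - 2α ∈ (0, 1]`. As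
`f' = p + z p'` for `p(z) = f(z)/z`, and likewise for `h_α(z) = k_α(z)/z`, the theorem of
Hallenbeck and Ruscheweyh gives that `p` is subordinate to `h_α`. So it suffices to bound `Im h_α`,
and by the maximum principle to do so on the unit circle. For `α = 3/5`,
`Im h_α(e^{iθ}) = 5 ((2 sin(θ/2))^{1/5} sin(π/10 + 9θ/10) - sin θ)`, and the maximum of this over
`(0, π)`, attained near `θ = 0.11`, falls just short of `5 (2^{1/5} - 1)`. The estimate replaces
the fifth root by tangent lines, as Bernoulli's inequality allows.
-/

open Complex Metric Set Filter
open scoped Real Topology ComplexConjugate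

/-! ### Jack's lemma and the Miller–Mocanu lemma -/

theorem le_deriv_of_forall_mem_Ioo {g : ℝ → ℝ} {g' a b c : ℝ} (hab : a < b)
    (hg : HasDerivAt g g' b) (hle : ∀ t ∈ Ioo a b, (b - t) * c ≤ g b - g t) : c ≤ g' := by
  have hslope : Tendsto (slope g b) (𝓝[<] b) (𝓝 g') :=
    (hasDerivAt_iff_tendsto_slope.1 hg).mono_left (nhdsWithin_mono _ fun _ hx ↦ ne_of_lt hx)
  refine ge_of_tendsto hslope ?_
  filter_upwards [Ioo_mem_nhdsLT hab] with t ht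
  rw [slope_comm, slope_def_field, le_div_iff₀ (sub_pos.2 ht.2), mul_comm]
  exact hle t ht

theorem im_mul_deriv_eq_zero_of_circle_max {g : ℂ → ℂ} {g' z₀ : ℂ} (hg : HasDerivAt g g' z₀)
    (hmax : ∀ z, ‖z‖ = ‖z₀‖ → (g z).re ≤ (g z₀).re) : (z₀ * g').im = 0 := by
  have hrot : HasDerivAt (fun s : ℂ ↦ z₀ * exp (s * I)) (z₀ * I) ((0 : ℝ) : ℂ) := by
    simpa using (((hasDerivAt_id ((0 : ℝ) : ℂ)).mul_const I).cexp).const_mul z₀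
  have hcomp : HasDerivAt (fun s : ℂ ↦ g (z₀ * exp (s * I))) (g' * (z₀ * I)) ((0 : ℝ) : ℂ) :=
    HasDerivAt.comp _ (by simpa using hg) hrot
  have hlocal : IsLocalMax (fun s : ℝ ↦ (g (z₀ * exp (s * I))).re) 0 :=
    Eventually.of_forall fun s ↦ by
      simpa using hmax (z₀ * exp (s * I)) (by simp [norm_exp_ofReal_mul_I])
  have hzero := hlocal.hasDerivAt_eq_zero hcomp.real_of_complex
  simp only [mul_re, mul_im, I_re, I_im] at hzero ⊢
  linarith

theorem le_re_mul_deriv_of_radial_bound {g : ℂ → ℂ} {g' z₀ : ℂ} {c : ℝ}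
    (hg : HasDerivAt g g' z₀)
    (hle : ∀ t ∈ Ioo (0 : ℝ) 1, (1 - t) * c ≤ (g z₀).re - (g (t * z₀)).re) :
    c ≤ (z₀ * g').re := by
  have hcomp : HasDerivAt (fun s : ℂ ↦ g (s * z₀)) (g' * z₀) ((1 : ℝ) : ℂ) :=
    HasDerivAt.comp _ (by simpa using hg)
      (by simpa using (hasDerivAt_id ((1 : ℝ) : ℂ)).mul_const z₀)
  rw [mul_comm]
  exact le_deriv_of_forall_mem_Ioo one_pos hcomp.real_of_complex (by simpa using hle)

theorem jack_lemma {ω : ℂ → ℂ} {ω' z₀ : ℂ} (hω : HasDerivAt ω ω' z₀)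
    (hd : DifferentiableOn ℂ ω (ball 0 ‖z₀‖)) (h0 : ω 0 = 0) (hne : ω z₀ ≠ 0)
    (hmax : ∀ z, ‖z‖ ≤ ‖z₀‖ → ‖ω z‖ ≤ ‖ω z₀‖) :
    ∃ m : ℝ, 1 ≤ m ∧ z₀ * ω' = m * ω z₀ := by
  have hz₀ : 0 < ‖z₀‖ := norm_pos_iff.2 fun h ↦ hne (h ▸ h0)
  have hre (z : ℂ) : (ω z / ω z₀).re ≤ ‖ω z‖ / ‖ω z₀‖ := by
    simpa only [norm_div] using re_le_norm (ω z / ω z₀)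
  have hone : (ω z₀ / ω z₀).re = 1 := by rw [div_self hne, one_re]
  have hschwarz (t : ℝ) (ht : t ∈ Ioo (0 : ℝ) 1) : ‖ω (t * z₀)‖ ≤ t * ‖ω z₀‖ := by
    have hnorm : ‖(t : ℂ) * z₀‖ = t * ‖z₀‖ := by
      rw [norm_mul, norm_real, Real.norm_of_nonneg ht.1.le]
    have hmem : (t : ℂ) * z₀ ∈ ball (0 : ℂ) ‖z₀‖ := by
      rw [mem_ball_zero_iff, hnorm]
      exact mul_lt_of_lt_one_left hz₀ ht.2
    have hbound := dist_le_div_mul_dist_of_mapsTo_ball (R₂ := ‖ω z₀‖) hd (fun z hz ↦ by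
      rw [h0, mem_closedBall_zero_iff]
      exact hmax z (mem_ball_zero_iff.1 hz).le) hmem
    rw [h0, dist_zero_right, dist_zero_right, hnorm] at hbound
    exact hbound.trans_eq (by field_simp)
  have him : (z₀ * (ω' / ω z₀)).im = 0 :=
    im_mul_deriv_eq_zero_of_circle_max (hω.div_const _) fun z hz ↦ by
      rw [hone]
      exact (hre z).trans ((div_le_one (norm_pos_iff.2 hne)).2 (hmax z hz.le))
  have hrad : 1 ≤ (z₀ * (ω' / ω z₀)).re :=
    le_re_mul_deriv_of_radial_bound (hω.div_const _) fun t ht ↦ by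
      have := (hre (t * z₀)).trans ((div_le_iff₀ (norm_pos_iff.2 hne)).2 (hschwarz t ht))
      linarith
  refine ⟨_, hrad, ?_⟩
  rw [conj_eq_iff_re.1 (conj_eq_iff_im.2 him)]
  field_simp

theorem exists_first_exit {E X : Type*} [NormedAddCommGroup E] [NormedSpace ℝ E] [ProperSpace E]
    [TopologicalSpace X] {p : E → X} {V : Set X} {R : ℝ} {z : E}
    (hp : ContinuousOn p (ball 0 R)) (hV : IsOpen V) (h0 : p 0 ∈ V) (hz : z ∈ ball 0 R)
    (hpz : p z ∉ V) :
    ∃ z₀, ‖z₀‖ ≤ ‖z‖ ∧ p z₀ ∉ V ∧ MapsTo p (closedBall 0 ‖z₀‖) (closure V) := by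
  have hsub : closedBall 0 ‖z‖ ⊆ ball (0 : E) R := closedBall_subset_ball (by simpa using hz)
  have hcompact : IsCompact (closedBall (0 : E) ‖z‖ ∩ p ⁻¹' Vᶜ) :=
    (isCompact_closedBall _ _).of_isClosed_subset
      ((hp.mono hsub).preimage_isClosed_of_isClosed isClosed_closedBall hV.isClosed_compl)
      inter_subset_left
  obtain ⟨z₀, ⟨hz₀, hpz₀⟩, hmin⟩ :=
    hcompact.exists_isMinOn ⟨z, by simp, hpz⟩ continuous_norm.continuousOn
  rw [mem_closedBall_zero_iff] at hz₀
  have hmaps : MapsTo p (ball 0 ‖z₀‖) V := fun w hw ↦ by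
    rw [mem_ball_zero_iff] at hw
    by_contra hpw
    exact hw.not_ge (hmin ⟨mem_closedBall_zero_iff.2 (hw.le.trans hz₀), hpw⟩)
  have hz₀ne : ‖z₀‖ ≠ 0 := norm_ne_zero_iff.2 fun h ↦ hpz₀ (h ▸ h0)
  refine ⟨z₀, hz₀, hpz₀, ?_⟩
  rw [← closure_ball 0 hz₀ne]
  refine hmaps.closure_of_continuousOn (hp.mono ?_)
  rw [closure_ball 0 hz₀ne]
  exact (closedBall_subset_closedBall hz₀).trans hsub

section InjectiveHolomorphic

variable {h p : ℂ → ℂ} {U : Set ℂ} {r : ℝ} {z₀ : ℂ}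

theorem isOpen_image_of_deriv_ne_zero (hU : IsOpen U) (hd : DifferentiableOn ℂ h U)
    (hne : ∀ ζ ∈ U, deriv h ζ ≠ 0) : IsOpen (h '' U) := by
  refine isOpen_iff_mem_nhds.2 ?_
  rintro _ ⟨ζ, hζ, rfl⟩
  rw [← ((hd.analyticAt (hU.mem_nhds hζ)).hasStrictDerivAt).map_nhds_eq (hne ζ hζ)]
  exact image_mem_map (hU.mem_nhds hζ)

theorem hasDerivAt_invFunOn (hU : IsOpen U) (hd : DifferentiableOn ℂ h U) (hinj : InjOn h U)
    {ζ : ℂ} (hζ : ζ ∈ U) (hne : deriv h ζ ≠ 0) :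
    HasDerivAt (Function.invFunOn h U) (deriv h ζ)⁻¹ (h ζ) := by
  have hstrict : HasStrictDerivAt h (deriv h ζ) ζ :=
    (hd.analyticAt (hU.mem_nhds hζ)).hasStrictDerivAt
  exact (hstrict.to_local_left_inverse hne
    (eventually_of_mem (hU.mem_nhds hζ) hinj.leftInvOn_invFunOn)).hasDerivAt

theorem exists_mul_deriv_eq_of_mapsTo_image (hU : IsOpen U) (hh : DifferentiableOn ℂ h U)
    (hinj : InjOn h U) (hne : ∀ ζ ∈ U, deriv h ζ ≠ 0) (hr : 0 < r) (hrU : closedBall 0 r ⊆ U)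
    (hp : ∀ w ∈ closedBall 0 ‖z₀‖, DifferentiableAt ℂ p w) (h0 : p 0 = h 0)
    (hmaps : MapsTo p (closedBall 0 ‖z₀‖) (h '' closedBall 0 r)) {ζ : ℂ} (hζ : ‖ζ‖ = r)
    (hpζ : p z₀ = h ζ) :
    ∃ m : ℝ, 1 ≤ m ∧ z₀ * deriv p z₀ = m * (ζ * deriv h ζ) := by
  set ω := Function.invFunOn h U ∘ p with hω
  have hval {w η : ℂ} (hη : η ∈ closedBall 0 r) (hwη : p w = h η) : ω w = η := by
    rw [hω, Function.comp_apply, hwη, hinj.leftInvOn_invFunOn (hrU hη)]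
  have hderiv {w η : ℂ} (hw : w ∈ closedBall 0 ‖z₀‖) (hη : η ∈ closedBall 0 r)
      (hwη : p w = h η) : HasDerivAt ω ((deriv h η)⁻¹ * deriv p w) w :=
    HasDerivAt.comp _ (hwη ▸ hasDerivAt_invFunOn hU hh hinj (hrU hη) (hne η (hrU hη)))
      (hp w hw).hasDerivAt
  have hζmem : ζ ∈ closedBall 0 r := mem_closedBall_zero_iff.2 hζ.le
  obtain ⟨m, hm, hjack⟩ := jack_lemma (hderiv (by simp) hζmem hpζ)
    (fun w hw ↦ by
      obtain ⟨η, hη, hwη⟩ := hmaps (ball_subset_closedBall hw)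
      exact (hderiv (ball_subset_closedBall hw) hη hwη.symm).differentiableAt
        |>.differentiableWithinAt)
    (hval (mem_closedBall_self hr.le) h0)
    (by rw [hval hζmem hpζ, ← norm_ne_zero_iff, hζ]; exact hr.ne')
    (fun w hw ↦ by
      obtain ⟨η, hη, hwη⟩ := hmaps (mem_closedBall_zero_iff.2 hw)
      rw [hval hη hwη.symm, hval hζmem hpζ, hζ]
      exact mem_closedBall_zero_iff.1 hη)
  refine ⟨m, hm, ?_⟩
  rw [hval hζmem hpζ] at hjack
  have := hne ζ (hrU hζmem)
  field_simp at hjack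
  linear_combination hjack

/-- The **Miller–Mocanu lemma**: where `p` first leaves `h '' ball 0 r`, the radial derivative of
`p` is a multiple, by a factor at least one, of that of `h`. -/
theorem exists_mul_deriv_eq_of_notMem_image (hU : IsOpen U) (hh : DifferentiableOn ℂ h U)
    (hinj : InjOn h U) (hne : ∀ ζ ∈ U, deriv h ζ ≠ 0) (hr : 0 < r) (hrU : closedBall 0 r ⊆ U)
    {R : ℝ} {z : ℂ} (hp : DifferentiableOn ℂ p (ball 0 R)) (h0 : p 0 = h 0)
    (hz : z ∈ ball 0 R) (hpz : p z ∉ h '' ball 0 r) :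
    ∃ z₀ ζ : ℂ, ∃ m : ℝ, ‖z₀‖ ≤ ‖z‖ ∧ ‖ζ‖ = r ∧ 1 ≤ m ∧ p z₀ = h ζ ∧
      z₀ * deriv p z₀ = m * (ζ * deriv h ζ) := by
  have hballU : ball 0 r ⊆ U := ball_subset_closedBall.trans hrU
  have hV : IsOpen (h '' ball 0 r) := isOpen_image_of_deriv_ne_zero isOpen_ball (hh.mono hballU)
    fun ζ hζ ↦ hne ζ (hballU hζ)
  have hclosed : IsClosed (h '' closedBall 0 r) :=
    ((isCompact_closedBall 0 r).image_of_continuousOn (hh.continuousOn.mono hrU)).isClosed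
  obtain ⟨z₀, hz₀, hpz₀, hmaps⟩ := exists_first_exit hp.continuousOn hV
    ⟨0, mem_ball_self hr, h0.symm⟩ hz hpz
  replace hmaps : MapsTo p (closedBall 0 ‖z₀‖) (h '' closedBall 0 r) :=
    hmaps.mono_right (closure_minimal (image_mono ball_subset_closedBall) hclosed)
  obtain ⟨ζ, hζ, hpζ⟩ := hmaps (mem_closedBall_zero_iff.2 le_rfl)
  have hζr : ‖ζ‖ = r := le_antisymm (mem_closedBall_zero_iff.1 hζ)
    (not_lt.1 fun hlt ↦ hpz₀ ⟨ζ, mem_ball_zero_iff.2 hlt, hpζ⟩)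
  have hdiff (w : ℂ) (hw : w ∈ closedBall 0 ‖z₀‖) : DifferentiableAt ℂ p w :=
    hp.differentiableAt (isOpen_ball.mem_nhds
      (closedBall_subset_ball (hz₀.trans_lt (mem_ball_zero_iff.1 hz)) hw))
  obtain ⟨m, hm, hderiv⟩ := exists_mul_deriv_eq_of_mapsTo_image hU hh hinj hne hr hrU hdiff h0
    hmaps hζr hpζ.symm
  exact ⟨z₀, ζ, m, hz₀, hζr, hm, hpζ.symm, hderiv⟩

end InjectiveHolomorphic

/-! ### Convex univalent functions -/

theorem re_lt_re_of_hasDerivAt {G G' : ℂ → ℂ}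
    (hG : ∀ t ∈ Icc (0 : ℝ) 1, HasDerivAt G (G' t) t) (hpos : ∀ t ∈ Ioo (0 : ℝ) 1, 0 < (G' t).re) :
    (G 0).re < (G 1).re := by
  have hreal (t : ℝ) (ht : t ∈ Icc (0 : ℝ) 1) :
      HasDerivAt (fun s : ℝ ↦ (G s).re) (G' t).re t := (hG t ht).real_of_complex
  have hmono : StrictMonoOn (fun s : ℝ ↦ (G s).re) (Icc 0 1) := by
    refine strictMonoOn_of_hasDerivWithinAt_pos (f' := fun t ↦ (G' t).re) (convex_Icc 0 1)
      (fun t ht ↦ (hreal t ht).continuousAt.continuousWithinAt) ?_ ?_ <;> rw [interior_Icc]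
    · exact fun t ht ↦ (hreal t (Ioo_subset_Icc_self ht)).hasDerivWithinAt
    · exact hpos
  simpa using hmono (left_mem_Icc.2 zero_le_one) (right_mem_Icc.2 zero_le_one) zero_lt_one

/-- The **Noshiro–Warschawski theorem**. -/
theorem injOn_of_convex_of_re_deriv_pos {U : Set ℂ} {G G' : ℂ → ℂ} (hU : Convex ℝ U)
    (hG : ∀ z ∈ U, HasDerivAt G (G' z) z) (hpos : ∀ z ∈ U, 0 < (G' z).re) : InjOn G U := by
  intro z hz w hw hzw
  by_contra hne
  have hsub : w - z ≠ 0 := sub_ne_zero.2 (Ne.symm hne)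
  have hseg (t : ℝ) (ht : t ∈ Icc (0 : ℝ) 1) : z + t * (w - z) ∈ U := by
    simpa [AffineMap.lineMap_apply, add_comm] using hU.lineMap_mem hz hw ht
  have hderiv (t : ℝ) (ht : t ∈ Icc (0 : ℝ) 1) : HasDerivAt
      (fun s : ℂ ↦ G (z + s * (w - z)) / (w - z)) (G' (z + t * (w - z))) t := by
    have hline : HasDerivAt (fun s : ℂ ↦ z + s * (w - z)) (w - z) (t : ℂ) := by
      simpa using ((hasDerivAt_id (t : ℂ)).mul_const (w - z)).const_add z
    simpa [hsub] using ((hG _ (hseg t ht)).comp (t : ℂ) hline).div_const (w - z)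
  have hlt := re_lt_re_of_hasDerivAt (G' := fun s ↦ G' (z + s * (w - z))) hderiv
    fun t ht ↦ hpos _ (hseg t (Ioo_subset_Icc_self ht))
  simp [hzw] at hlt

theorem deriv_zero_of_add_mul_deriv {F h : ℂ → ℂ} (hh : AnalyticAt ℂ h 0)
    (hode : ∀ᶠ z in 𝓝 0, h z + z * deriv h z = F z) : deriv F 0 = 2 * deriv h 0 := by
  have hsum : HasDerivAt (fun z ↦ h z + z * deriv h z)
      (deriv h 0 + (1 * deriv h 0 + 0 * deriv (deriv h) 0)) 0 :=
    hh.differentiableAt.hasDerivAt.add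
      ((hasDerivAt_id' 0).mul hh.deriv.differentiableAt.hasDerivAt)
  rw [← EventuallyEq.deriv_eq hode, hsum.deriv]
  ring

/-- A convex univalent function on the unit disk. Nonvanishing of the derivative, although a
consequence of injectivity, is recorded as a field. -/
structure IsConvexUnivalent (F : ℂ → ℂ) : Prop where
  differentiableOn : DifferentiableOn ℂ F (ball 0 1)
  injOn : InjOn F (ball 0 1)
  deriv_ne_zero : ∀ z ∈ ball (0 : ℂ) 1, deriv F z ≠ 0
  convex_image : Convex ℝ (F '' ball 0 1)

namespace IsConvexUnivalent

variable {F h p : ℂ → ℂ} {z ζ ξ : ℂ}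

theorem hasDerivAt (hF : IsConvexUnivalent F) (hz : z ∈ ball 0 1) :
    HasDerivAt F (deriv F z) z :=
  (hF.differentiableOn.differentiableAt (isOpen_ball.mem_nhds hz)).hasDerivAt

theorem hasDerivAt_invFunOn (hF : IsConvexUnivalent F) (hz : z ∈ ball 0 1) :
    HasDerivAt (Function.invFunOn F (ball 0 1)) (deriv F z)⁻¹ (F z) :=
  _root_.hasDerivAt_invFunOn isOpen_ball hF.differentiableOn hF.injOn hz (hF.deriv_ne_zero z hz)

theorem invFunOn_apply (hF : IsConvexUnivalent F) (hz : z ∈ ball 0 1) :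
    Function.invFunOn F (ball 0 1) (F z) = z :=
  hF.injOn.leftInvOn_invFunOn hz

/-- Schwarz's lemma applied to `z ↦ F⁻¹ (t F(z) + (1 - t) F(c z))` with `c = ξ / ζ`. -/
theorem norm_invFunOn_lineMap_le (hF : IsConvexUnivalent F) (hζ : ζ ∈ ball 0 1)
    (hξ : ‖ξ‖ ≤ ‖ζ‖) {t : ℝ} (ht : t ∈ Icc (0 : ℝ) 1) :
    ‖Function.invFunOn F (ball 0 1) (F ξ + t * (F ζ - F ξ))‖ ≤ ‖ζ‖ := by
  obtain rfl | hζ0 := eq_or_ne ζ 0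
  · obtain rfl : ξ = 0 := by simpa using hξ
    simp [hF.invFunOn_apply hζ]
  set c := ξ / ζ with hc_def
  have hc : ‖c‖ ≤ 1 := by
    rw [hc_def, norm_div]
    exact div_le_one_of_le₀ hξ (norm_nonneg ζ)
  have hcmaps : MapsTo (c * ·) (ball (0 : ℂ) 1) (ball 0 1) := fun w hw ↦ by
    rw [mem_ball_zero_iff] at hw ⊢
    rw [norm_mul]
    exact (mul_le_of_le_one_left (norm_nonneg w) hc).trans_lt hw
  set γ : ℂ → ℂ := fun w ↦ F (c * w) + t * (F w - F (c * w)) with hγ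
  have hγmem (w : ℂ) (hw : w ∈ ball 0 1) : γ w ∈ F '' ball 0 1 := by
    simpa [hγ, AffineMap.lineMap_apply, add_comm] using
      hF.convex_image.lineMap_mem (mem_image_of_mem F (hcmaps hw)) (mem_image_of_mem F hw) ht
  have hdF : DifferentiableOn ℂ (fun w ↦ F (c * w)) (ball 0 1) :=
    hF.differentiableOn.comp (by fun_prop) hcmaps
  have hdγ : DifferentiableOn ℂ γ (ball 0 1) :=
    hdF.add ((hF.differentiableOn.sub hdF).const_mul _)
  have hd : DifferentiableOn ℂ (Function.invFunOn F (ball 0 1)) (F '' ball 0 1) := by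
    rintro _ ⟨w, hw, rfl⟩
    exact (hF.hasDerivAt_invFunOn hw).differentiableAt.differentiableWithinAt
  have hschwarz := norm_le_norm_of_mapsTo_ball (hd.comp hdγ hγmem)
    (fun w hw ↦ ball_subset_closedBall (Function.invFunOn_mem (hγmem w hw)))
    (by simp [hγ, hF.invFunOn_apply (mem_ball_self one_pos)]) (mem_ball_zero_iff.1 hζ)
  simpa [hγ, hc_def, div_mul_cancel₀ _ hζ0] using hschwarz

theorem re_sub_div_nonneg (hF : IsConvexUnivalent F) (hζ : ζ ∈ ball 0 1) (hξ : ‖ξ‖ ≤ ‖ζ‖) :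
    0 ≤ ((F ζ - F ξ) / (ζ * deriv F ζ)).re := by
  set q := Function.invFunOn F (ball 0 1)
  have hline : HasDerivAt (fun s : ℂ ↦ F ξ + s * (F ζ - F ξ)) (F ζ - F ξ) ((1 : ℝ) : ℂ) := by
    simpa using ((hasDerivAt_id ((1 : ℝ) : ℂ)).mul_const (F ζ - F ξ)).const_add (F ξ)
  have hq : HasDerivAt (fun s : ℂ ↦ q (F ξ + s * (F ζ - F ξ)) / ζ)
      ((deriv F ζ)⁻¹ * (F ζ - F ξ) / ζ) ((1 : ℝ) : ℂ) := by
    refine HasDerivAt.div_const ?_ ζ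
    exact HasDerivAt.comp ((1 : ℝ) : ℂ) (by simpa using hF.hasDerivAt_invFunOn hζ) hline
  have hnonneg : 0 ≤ ((deriv F ζ)⁻¹ * (F ζ - F ξ) / ζ).re := by
    refine le_deriv_of_forall_mem_Ioo one_pos hq.real_of_complex fun t ht ↦ ?_
    obtain rfl | hζ0 := eq_or_ne ζ 0
    · simp
    have hbound : (q (F ξ + t * (F ζ - F ξ)) / ζ).re ≤ 1 := by
      refine (re_le_norm _).trans ?_
      rw [norm_div]
      exact div_le_one_of_le₀ (hF.norm_invFunOn_lineMap_le hζ hξ (Ioo_subset_Icc_self ht))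
        (norm_nonneg ζ)
    simpa [q, hF.invFunOn_apply hζ, hζ0] using hbound
  convert hnonneg using 2
  rw [div_mul_eq_div_div_swap, inv_mul_eq_div]

theorem re_sub_div_pos (hF : IsConvexUnivalent F) (hζ : ζ ∈ ball 0 1) (hξ : ‖ξ‖ < ‖ζ‖) :
    0 < ((F ζ - F ξ) / (ζ * deriv F ζ)).re := by
  have hζ0 : ζ ≠ 0 := norm_pos_iff.1 ((norm_nonneg ξ).trans_lt hξ)
  have hsub : ball 0 ‖ζ‖ ⊆ ball (0 : ℂ) 1 := ball_subset_ball (mem_ball_zero_iff.1 hζ).le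
  set G : ℂ → ℂ := fun w ↦ (F ζ - F w) / (ζ * deriv F ζ)
  have hG (w : ℂ) (hw : w ∈ ball 0 ‖ζ‖) : HasDerivAt G (-deriv F w / (ζ * deriv F ζ)) w :=
    ((hF.hasDerivAt (hsub hw)).const_sub (F ζ)).div_const _
  have hopen : IsOpen (G '' ball 0 ‖ζ‖) := by
    refine isOpen_image_of_deriv_ne_zero isOpen_ball
      (fun w hw ↦ (hG w hw).differentiableAt.differentiableWithinAt) fun w hw ↦ ?_
    rw [(hG w hw).deriv]
    exact div_ne_zero (neg_ne_zero.2 (hF.deriv_ne_zero w (hsub hw)))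
      (mul_ne_zero hζ0 (hF.deriv_ne_zero ζ hζ))
  have hhalf : G '' ball 0 ‖ζ‖ ⊆ {w | 0 ≤ w.re} := by
    rintro _ ⟨w, hw, rfl⟩
    exact hF.re_sub_div_nonneg hζ (mem_ball_zero_iff.1 hw).le
  have hint := interior_maximal hhalf hopen
  rw [interior_setOfPred_le_re] at hint
  exact hint (mem_image_of_mem G (mem_ball_zero_iff.2 hξ))

theorem re_deriv_div_deriv_pos_of_add_mul_deriv (hF : IsConvexUnivalent F)
    (hh : DifferentiableOn ℂ h (ball 0 1))
    (hode : ∀ z ∈ ball (0 : ℂ) 1, h z + z * deriv h z = F z) (hz : z ∈ ball 0 1) :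
    0 < (deriv h z / deriv F z).re := by
  have hderiv {w : ℂ} (hw : w ∈ ball 0 1) : HasDerivAt h (deriv h w) w :=
    (hh.differentiableAt (isOpen_ball.mem_nhds hw)).hasDerivAt
  have hF' := hF.deriv_ne_zero z hz
  obtain rfl | hz0 := eq_or_ne z 0
  · have htwo : deriv F 0 = 2 * deriv h 0 := deriv_zero_of_add_mul_deriv
      (hh.analyticAt (isOpen_ball.mem_nhds hz)) (eventually_of_mem (isOpen_ball.mem_nhds hz) hode)
    rw [htwo] at hF' ⊢
    have : deriv h 0 ≠ 0 := right_ne_zero_of_mul hF'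
    rw [div_mul_cancel_right₀ this]
    norm_num
  have hmem (t : ℝ) (ht : t ∈ Icc (0 : ℝ) 1) : (t : ℂ) * z ∈ ball (0 : ℂ) 1 := by
    rw [mem_ball_zero_iff, norm_mul, norm_real, Real.norm_of_nonneg ht.1] at *
    exact (mul_le_of_le_one_left (norm_nonneg z) ht.2).trans_lt hz
  have hcurve (t : ℝ) (ht : t ∈ Icc (0 : ℝ) 1) : HasDerivAt
      (fun s : ℂ ↦ (s * F z - s * h (s * z)) / (z * deriv F z))
      ((F z - F (t * z)) / (z * deriv F z)) t := by
    have hlin : HasDerivAt (fun s : ℂ ↦ s * z) z (t : ℂ) := by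
      simpa using (hasDerivAt_id (t : ℂ)).mul_const z
    have hid := hasDerivAt_id (t : ℂ)
    refine HasDerivAt.congr_deriv (((hid.mul_const (F z)).sub
      (hid.mul ((hderiv (hmem t ht)).comp (t : ℂ) hlin))).div_const _) ?_
    rw [← hode _ (hmem t ht)]
    simp only [id, Function.comp_apply]
    ring
  have hlt := re_lt_re_of_hasDerivAt (G' := fun s ↦ (F z - F (s * z)) / (z * deriv F z)) hcurve
    fun t ht ↦ hF.re_sub_div_pos hz <| by
      rw [norm_mul, norm_real, Real.norm_of_nonneg ht.1.le]
      exact mul_lt_of_lt_one_left (norm_pos_iff.2 hz0) ht.2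
  have hquot : (F z - h z) / (z * deriv F z) = deriv h z / deriv F z := by
    rw [← hode z hz]
    field_simp
    ring
  simpa [hquot] using hlt

theorem injOn_of_re_deriv_div_deriv_pos (hF : IsConvexUnivalent F)
    (hh : DifferentiableOn ℂ h (ball 0 1))
    (hpos : ∀ z ∈ ball (0 : ℂ) 1, 0 < (deriv h z / deriv F z).re) : InjOn h (ball 0 1) := by
  set q := Function.invFunOn F (ball 0 1)
  have hq {z : ℂ} (hz : z ∈ ball 0 1) : q (F z) = z := hF.invFunOn_apply hz
  have hinj : InjOn (h ∘ q) (F '' ball 0 1) := by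
    refine injOn_of_convex_of_re_deriv_pos hF.convex_image
      (G' := fun w ↦ deriv h (q w) / deriv F (q w)) ?_ ?_
    · rintro _ ⟨z, hz, rfl⟩
      rw [hq hz, div_eq_mul_inv]
      refine HasDerivAt.comp _ ?_ (hF.hasDerivAt_invFunOn hz)
      rw [hq hz]
      exact (hh.differentiableAt (isOpen_ball.mem_nhds hz)).hasDerivAt
    · rintro _ ⟨z, hz, rfl⟩
      rw [hq hz]
      exact hpos z hz
  intro z hz w hw hzw
  refine hF.injOn hz hw (hinj (mem_image_of_mem F hz) (mem_image_of_mem F hw) ?_)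
  rwa [Function.comp_apply, Function.comp_apply, hq hz, hq hw]

/-- The **Hallenbeck–Ruscheweyh theorem**, with the subordination of `p + z p'` to `F` written as
pointwise membership in the image of a smaller disk. -/
theorem mem_image_of_add_mul_deriv (hF : IsConvexUnivalent F)
    (hh : DifferentiableOn ℂ h (ball 0 1))
    (hode : ∀ z ∈ ball (0 : ℂ) 1, h z + z * deriv h z = F z)
    (hp : DifferentiableOn ℂ p (ball 0 1))
    (hsub : ∀ z ∈ ball (0 : ℂ) 1, ∃ ξ, ‖ξ‖ ≤ ‖z‖ ∧ p z + z * deriv p z = F ξ)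
    (hz : z ∈ ball 0 1) : p z ∈ h '' ball 0 1 := by
  have hre {w : ℂ} (hw : w ∈ ball 0 1) : 0 < (deriv h w / deriv F w).re :=
    hF.re_deriv_div_deriv_pos_of_add_mul_deriv hh hode hw
  have hne (w : ℂ) (hw : w ∈ ball 0 1) : deriv h w ≠ 0 := fun h0 ↦ by simpa [h0] using hre hw
  have h0 : p 0 = h 0 := by
    obtain ⟨ξ, hξ, hpξ⟩ := hsub 0 (mem_ball_self one_pos)
    obtain rfl : ξ = 0 := by simpa using hξ
    simpa [← hode 0 (mem_ball_self one_pos)] using hpξ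
  obtain ⟨r, hzr, hr1⟩ := exists_between (mem_ball_zero_iff.1 hz)
  have hr0 : 0 < r := (norm_nonneg z).trans_lt hzr
  by_contra hpz
  obtain ⟨z₀, ζ, m, hz₀, hζr, hm, hpζ, hexit⟩ :=
    exists_mul_deriv_eq_of_notMem_image isOpen_ball hh
      (hF.injOn_of_re_deriv_div_deriv_pos hh fun _ ↦ hre) hne hr0 (closedBall_subset_ball hr1) hp
      h0 hz fun hmem ↦ hpz (image_mono (ball_subset_ball hr1.le) hmem)
  have hζ : ζ ∈ ball 0 1 := mem_ball_zero_iff.2 (hζr.trans_lt hr1)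
  obtain ⟨ξ, hξ, hpξ⟩ := hsub z₀ (mem_ball_zero_iff.2 (hz₀.trans_lt (mem_ball_zero_iff.1 hz)))
  have hpos := hF.re_sub_div_pos hζ ((hξ.trans hz₀).trans_lt (hzr.trans_eq hζr.symm))
  have hquot : (F ζ - F ξ) / (ζ * deriv F ζ) = ((1 - m : ℝ) : ℂ) * (deriv h ζ / deriv F ζ) := by
    have hζ0 : ζ ≠ 0 := norm_pos_iff.1 (hr0.trans_eq hζr.symm)
    have := hF.deriv_ne_zero ζ hζ
    rw [← hpξ, hexit, hpζ, ← hode ζ hζ]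
    push_cast
    field_simp
    ring
  rw [hquot, re_ofReal_mul] at hpos
  nlinarith [hre hζ]

end IsConvexUnivalent

/-! ### Real powers of half-planes -/

section RealPowers

variable {z w : ℂ} {p q c : ℝ}

theorem log_cpow_ofReal (hz : z ≠ 0) (harg : |z.arg * q| < π) : log (z ^ (q : ℂ)) = log z * q := by
  have him : (log z * q).im = z.arg * q := by rw [im_mul_ofReal, log_im]
  rw [cpow_def_of_ne_zero hz, log_exp] <;> rw [him]
  exacts [(abs_lt.1 harg).1, (abs_lt.1 harg).2.le]

theorem arg_cpow_ofReal (hz : z ≠ 0) (harg : |z.arg * q| < π) :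
    (z ^ (q : ℂ)).arg = z.arg * q := by
  rw [← log_im, log_cpow_ofReal hz harg, im_mul_ofReal, log_im]

theorem cpow_ofReal_cpow_inv (hz : z ≠ 0) (hq : q ≠ 0) (harg : |z.arg * q| < π) :
    (z ^ (q : ℂ)) ^ ((q⁻¹ : ℝ) : ℂ) = z := by
  have hq' : (q : ℂ) ≠ 0 := ofReal_ne_zero.2 hq
  rw [cpow_def_of_ne_zero (by simp [cpow_eq_zero_iff, hz]), log_cpow_ofReal hz harg, ofReal_inv,
    mul_assoc, mul_inv_cancel₀ hq', mul_one, exp_log hz]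

theorem abs_arg_lt_iff_norm_mul_cos_lt_re (hz : z ≠ 0) (hc : c ∈ Icc 0 π) :
    |z.arg| < c ↔ ‖z‖ * Real.cos c < z.re := by
  rw [← norm_mul_cos_arg z, mul_lt_mul_iff_right₀ (norm_pos_iff.2 hz), ← Real.cos_abs z.arg,
    Real.strictAntiOn_cos.lt_iff_gt hc ⟨abs_nonneg _, abs_arg_le_pi z⟩]

theorem cos_rpow_mul_cos_rpow_le {a b : ℝ} (hp : p ∈ Icc 0 1) (ha : a ∈ Icc (-(π / 2)) (π / 2))
    (hb : b ∈ Icc (-(π / 2)) (π / 2)) :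
    Real.cos a ^ p * Real.cos b ^ (1 - p) ≤ Real.cos (p * a + (1 - p) * b) :=
  calc Real.cos a ^ p * Real.cos b ^ (1 - p)
    _ ≤ p * Real.cos a + (1 - p) * Real.cos b :=
        Real.geom_mean_le_arith_mean2_weighted hp.1 (sub_nonneg.2 hp.2)
          (Real.cos_nonneg_of_mem_Icc ha) (Real.cos_nonneg_of_mem_Icc hb) (by ring)
    _ ≤ Real.cos (p * a + (1 - p) * b) :=
        strictConcaveOn_cos_Icc.concaveOn.2 ha hb hp.1 (sub_nonneg.2 hp.2) (by ring)

theorem re_cpow_ofReal_mul_exp (z : ℂ) (q b : ℝ) :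
    (z ^ (q : ℂ) * exp (b * I)).re = ‖z‖ ^ q * Real.cos (q * z.arg + b) := by
  rw [mul_re, cpow_ofReal_re, cpow_ofReal_im, exp_ofReal_mul_I_re, exp_ofReal_mul_I_im,
    Real.cos_add, mul_comm q]
  ring

theorem re_rpow_mul_cos_rpow_le {b : ℝ} (hp : p ∈ Icc 0 1) (hz : 0 ≤ z.re)
    (hb : b ∈ Icc (-(π / 2)) (π / 2)) :
    z.re ^ p * Real.cos b ^ (1 - p) ≤ (z ^ (p : ℂ) * exp (((1 - p) * b : ℝ) * I)).re := by
  have harg : z.arg ∈ Icc (-(π / 2)) (π / 2) := abs_le.1 (abs_arg_le_pi_div_two_iff.2 hz)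
  rw [re_cpow_ofReal_mul_exp, ← norm_mul_cos_arg,
    Real.mul_rpow (norm_nonneg z) (Real.cos_nonneg_of_mem_Icc harg), mul_assoc]
  gcongr
  exact cos_rpow_mul_cos_rpow_le hp harg hb

theorem re_rpow_mul_cos_arg_rpow (hz : 0 < z.re) :
    z.re ^ p * Real.cos z.arg ^ (1 - p) = (z ^ (p : ℂ) * exp (((1 - p) * z.arg : ℝ) * I)).re := by
  have harg : 0 < Real.cos z.arg :=
    Real.cos_pos_of_mem_Ioo (abs_lt.1 (abs_arg_lt_pi_div_two_iff.2 (Or.inl hz)))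
  rw [re_cpow_ofReal_mul_exp, ← norm_mul_cos_arg, Real.mul_rpow (norm_nonneg z) harg.le,
    mul_assoc, ← Real.rpow_add harg]
  norm_num [← add_mul]

theorem convex_setOf_norm_mul_lt_re (hc : 0 ≤ c) : Convex ℝ {z : ℂ | ‖z‖ * c < z.re} := by
  have hconcave : ConcaveOn ℝ univ fun z : ℂ ↦ z.re - c • ‖z‖ :=
    (reLm.concaveOn convex_univ).sub (convexOn_univ_norm.smul hc)
  simpa [sub_pos, mul_comm] using hconcave.convex_gt 0

theorem image_cpow_rightHalfPlane (hp : p ∈ Ioc 0 2) :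
    (fun z : ℂ ↦ z ^ (p : ℂ)) '' {z | 0 < z.re} = {w | ‖w‖ * Real.cos (π / 2 * p) < w.re} := by
  have hangle : π / 2 * p ∈ Icc 0 π := ⟨by nlinarith [hp.1, Real.pi_pos], by
    nlinarith [hp.2, Real.pi_pos]⟩
  refine Subset.antisymm ?_ fun w hw ↦ ?_
  · rintro _ ⟨z, hz, rfl⟩
    have hz0 : z ≠ 0 := fun h ↦ by simp [h] at hz
    have harg : |z.arg * p| < π / 2 * p := by
      rw [abs_mul, abs_of_pos hp.1]
      exact mul_lt_mul_of_pos_right (abs_arg_lt_pi_div_two_iff.2 (Or.inl hz)) hp.1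
    rw [mem_ofPred_eq, ← abs_arg_lt_iff_norm_mul_cos_lt_re (by simp [cpow_eq_zero_iff, hz0]) hangle,
      arg_cpow_ofReal hz0 (harg.trans_le hangle.2)]
    exact harg
  · have hw0 : w ≠ 0 := fun h ↦ by simp [h] at hw
    have harg : |w.arg * p⁻¹| < π / 2 := by
      rw [mem_ofPred_eq, ← abs_arg_lt_iff_norm_mul_cos_lt_re hw0 hangle] at hw
      rwa [abs_mul, abs_of_pos (inv_pos.2 hp.1), mul_inv_lt_iff₀ hp.1]
    have harg' : |w.arg * p⁻¹| < π := harg.trans (by linarith [Real.pi_pos])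
    have hx0 : w ^ ((p⁻¹ : ℝ) : ℂ) ≠ 0 := by simp [cpow_eq_zero_iff, hw0]
    refine ⟨w ^ ((p⁻¹ : ℝ) : ℂ), ?_, ?_⟩
    · rw [← arg_cpow_ofReal hw0 harg', abs_arg_lt_pi_div_two_iff] at harg
      exact harg.resolve_right hx0
    · simpa using cpow_ofReal_cpow_inv hw0 (inv_ne_zero hp.1.ne') harg'

/-- Convexity holds because the functional `w ↦ Re (w e^{i (1 - p) b})` is minimal on the image
at the boundary point whose preimage has argument `b`. -/
theorem convex_image_cpow_halfPlane (hp0 : 0 < p) (hp1 : p ≤ 1) (hc : 0 ≤ c) :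
    Convex ℝ ((fun z : ℂ ↦ z ^ (p : ℂ)) '' {z | c < z.re}) := by
  have hcos : 0 ≤ Real.cos (π / 2 * p) := Real.cos_nonneg_of_mem_Icc
    ⟨by nlinarith [Real.pi_pos], by nlinarith [Real.pi_pos]⟩
  have hsector : Convex ℝ ((fun z : ℂ ↦ z ^ (p : ℂ)) '' {z | 0 < z.re}) := by
    rw [image_cpow_rightHalfPlane ⟨hp0, hp1.trans one_le_two⟩]
    exact convex_setOf_norm_mul_lt_re hcos
  rintro _ ⟨z₁, hz₁, rfl⟩ _ ⟨z₂, hz₂, rfl⟩ s t hs ht hst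
  obtain ⟨z, hz, hzw⟩ := hsector (mem_image_of_mem _ (hc.trans_lt hz₁))
    (mem_image_of_mem _ (hc.trans_lt hz₂)) hs ht hst
  refine ⟨z, ?_, hzw⟩
  have harg : |z.arg| < π / 2 := abs_arg_lt_pi_div_two_iff.2 (Or.inl hz)
  have hcosz : 0 < Real.cos z.arg ^ (1 - p) :=
    Real.rpow_pos_of_pos (Real.cos_pos_of_mem_Ioo (abs_lt.1 harg)) _
  have hsupport {x : ℂ} (hx : c < x.re) : c ^ p * Real.cos z.arg ^ (1 - p) <
      (x ^ (p : ℂ) * exp (((1 - p) * z.arg : ℝ) * I)).re :=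
    (mul_lt_mul_of_pos_right (Real.rpow_lt_rpow hc hx hp0) hcosz).trans_le
      (re_rpow_mul_cos_rpow_le ⟨hp0.le, hp1⟩ (hc.trans hx.le) (abs_le.1 harg.le))
  have hconvex := convex_Ioi _ (mem_Ioi.2 (hsupport hz₁)) (mem_Ioi.2 (hsupport hz₂)) hs ht hst
  have hlt : c ^ p * Real.cos z.arg ^ (1 - p) < z.re ^ p * Real.cos z.arg ^ (1 - p) := by
    rw [re_rpow_mul_cos_arg_rpow hz, show z ^ (p : ℂ) = _ from hzw, add_mul, add_re]
    simpa [mul_assoc] using hconvex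
  exact (Real.rpow_lt_rpow_iff hc (le_of_lt hz) hp0).1 (lt_of_mul_lt_mul_right hlt hcosz.le)

end RealPowers

theorem mem_ball_iff_half_lt_re_inv_one_sub {z : ℂ} :
    z ∈ ball 0 1 ↔ 1 / 2 < ((1 - z)⁻¹).re := by
  obtain rfl | hz := eq_or_ne z 1
  · simp
  have hpos : 0 < normSq (1 - z) := normSq_pos.2 (sub_ne_zero.2 hz.symm)
  rw [mem_ball_zero_iff, ← sq_lt_one_iff₀ (norm_nonneg z), ← normSq_eq_norm_sq, inv_re,
    lt_div_iff₀ hpos]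
  simp only [normSq_apply, sub_re, sub_im, one_re, one_im]
  constructor <;> intro h <;> linarith

theorem one_sub_mem_slitPlane {z : ℂ} (hz : z ∈ ball 0 1) : 1 - z ∈ slitPlane := by
  simpa [sub_eq_add_neg] using mem_slitPlane_of_norm_lt_one (z := -z) (by simpa using hz)

theorem hasDerivAt_one_sub_cpow {z c : ℂ} (hz : 1 - z ∈ slitPlane) :
    HasDerivAt (fun z ↦ (1 - z) ^ c) (-(c * (1 - z) ^ (c - 1))) z := by
  simpa using ((hasDerivAt_id z).const_sub 1).cpow_const hz

theorem image_one_sub_cpow_neg (p : ℝ) : (fun z : ℂ ↦ (1 - z) ^ (-p : ℂ)) '' ball 0 1 =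
    (fun z : ℂ ↦ z ^ (p : ℂ)) '' {z | 1 / 2 < z.re} := by
  have hball : (fun z : ℂ ↦ (1 - z)⁻¹) '' ball 0 1 = {z | 1 / 2 < z.re} := by
    refine Subset.antisymm (image_subset_iff.2 fun z ↦ mem_ball_iff_half_lt_re_inv_one_sub.1) ?_
    intro x hx
    exact ⟨1 - x⁻¹, mem_ball_iff_half_lt_re_inv_one_sub.2 (by simpa using hx), by simp⟩
  rw [← hball, image_image]
  refine image_congr fun z hz ↦ ?_
  rw [cpow_neg, inv_cpow _ _ (slitPlane_arg_ne_pi (one_sub_mem_slitPlane hz))]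

theorem isConvexUnivalent_one_sub_cpow_neg {p : ℝ} (hp0 : 0 < p) (hp1 : p ≤ 1) :
    IsConvexUnivalent fun z ↦ (1 - z) ^ (-p : ℂ) where
  differentiableOn z hz :=
    (hasDerivAt_one_sub_cpow (one_sub_mem_slitPlane hz)).differentiableAt.differentiableWithinAt
  injOn := by
    have hleft : LeftInvOn (fun w : ℂ ↦ 1 - w ^ (((-p)⁻¹ : ℝ) : ℂ))
        (fun z : ℂ ↦ (1 - z) ^ (-p : ℂ)) (ball 0 1) := fun z hz ↦ by
      have hslit := one_sub_mem_slitPlane hz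
      have harg : |(1 - z).arg * -p| < π := by
        rw [abs_mul, abs_neg, abs_of_pos hp0]
        refine (mul_le_of_le_one_right (abs_nonneg _) hp1).trans_lt (abs_lt.2 ⟨neg_pi_lt_arg _, ?_⟩)
        exact (arg_le_pi _).lt_of_ne (slitPlane_arg_ne_pi hslit)
      have hinv := cpow_ofReal_cpow_inv (slitPlane_ne_zero hslit) (neg_ne_zero.2 hp0.ne') harg
      rw [ofReal_neg] at hinv
      simp only [hinv, sub_sub_cancel]
    exact hleft.injOn
  deriv_ne_zero z hz := by
    have hslit := one_sub_mem_slitPlane hz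
    rw [(hasDerivAt_one_sub_cpow hslit).deriv]
    simp [cpow_eq_zero_iff, slitPlane_ne_zero hslit, hp0.ne']
  convex_image := by
    rw [image_one_sub_cpow_neg]
    exact convex_image_cpow_halfPlane hp0 hp1 (by norm_num)

/-! ### The subordination of `f(z)/z` to `h_α` -/

theorem re_ofReal_mul_div_one_sub {ζ : ℂ} (m : ℝ) (hζ : ‖ζ‖ = 1) (hζ1 : ζ ≠ 1) :
    (m * ζ / (1 - ζ)).re = -(m / 2) := by
  have hne : 1 - ζ ≠ 0 := sub_ne_zero.2 hζ1.symm
  have hsq : ζ.re * ζ.re + ζ.im * ζ.im = 1 := by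
    rw [← normSq_apply, normSq_eq_norm_sq, hζ, one_pow]
  have hnormSq : normSq (1 - ζ) = 2 * (1 - ζ.re) := by
    rw [normSq_apply, sub_re, sub_im, one_re, one_im]
    linarith
  have hre : 2 * (1 - ζ.re) ≠ 0 := hnormSq ▸ (normSq_pos.2 hne).ne'
  rw [div_re, ← add_div, hnormSq, div_eq_iff hre, re_ofReal_mul, im_ofReal_mul,
    sub_re, sub_im, one_re, one_im]
  linear_combination -m * hsq

theorem norm_lt_one_of_re_mul_deriv_div_one_sub {φ : ℂ → ℂ}
    (hφ : DifferentiableOn ℂ φ (ball 0 1)) (h0 : φ 0 = 0) (hne : ∀ z ∈ ball 0 1, φ z ≠ 1)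
    (hre : ∀ z ∈ ball 0 1, -(1 / 2) < (z * deriv φ z / (1 - φ z)).re) {z : ℂ}
    (hz : z ∈ ball 0 1) : ‖φ z‖ < 1 := by
  by_contra hφz
  obtain ⟨z₀, ζ, m, hz₀, hζ, hm, hφz₀, hderiv⟩ :=
    exists_mul_deriv_eq_of_notMem_image (h := id) isOpen_univ differentiableOn_id
      (injOn_id _) (by simp) one_pos (subset_univ _) hφ h0 hz (by simpa using hφz)
  have hz₀_mem : z₀ ∈ ball 0 1 := mem_ball_zero_iff.2 (hz₀.trans_lt (mem_ball_zero_iff.1 hz))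
  have hlt := hre z₀ hz₀_mem
  have hne₀ := hne z₀ hz₀_mem
  rw [hderiv, hφz₀, id_eq, deriv_id, mul_one] at hlt
  rw [hφz₀] at hne₀
  rw [re_ofReal_mul_div_one_sub m hζ hne₀] at hlt
  linarith

theorem cpow_const_eq_of_logDeriv_eq_div {g u : ℂ → ℂ} {c : ℂ} (hc : c ≠ 0)
    (hg : DifferentiableOn ℂ g (ball 0 1)) (hne : ∀ z ∈ ball 0 1, g z ≠ 0) (hg0 : g 0 = 1)
    (hu : DifferentiableOn ℂ u (ball 0 1)) (hslit : ∀ z ∈ ball 0 1, u z ∈ slitPlane)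
    (hu0 : u 0 = 1) (hlog : ∀ z ∈ ball 0 1, logDeriv u z = logDeriv g z / c) {z : ℂ}
    (hz : z ∈ ball 0 1) : u z ^ c = g z := by
  have hpow : ∀ w ∈ ball 0 1, HasDerivAt (fun w ↦ u w ^ c) (u w ^ c * logDeriv g w) w := by
    refine fun w hw ↦ ((hu.differentiableAt (isOpen_ball.mem_nhds hw)).hasDerivAt.cpow_const
      (hslit w hw)).congr_deriv ?_
    have hu_ne := slitPlane_ne_zero (hslit w hw)
    rw [cpow_sub _ _ hu_ne, cpow_one, ← mul_div_cancel₀ (logDeriv g w) hc, ← hlog w hw,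
      logDeriv_apply]
    field_simp
  have hpow_ne : ∀ w ∈ ball 0 1, u w ^ c ≠ 0 := fun w hw ↦ by
    simp [cpow_eq_zero_iff, slitPlane_ne_zero (hslit w hw)]
  have hpow_diff : DifferentiableOn ℂ (fun w ↦ u w ^ c) (ball 0 1) :=
    fun w hw ↦ (hpow w hw).differentiableAt.differentiableWithinAt
  obtain ⟨b, -, hb⟩ := (logDeriv_eqOn_iff hpow_diff hg isOpen_ball
    (convex_ball _ _).isPreconnected hne hpow_ne).1 fun w hw ↦ by
      rw [logDeriv_apply, (hpow w hw).deriv, mul_div_cancel_left₀ _ (hpow_ne w hw)]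
  have hb1 : b = 1 := by simpa [hu0, hg0] using (hb (mem_ball_self one_pos)).symm
  simpa [hb1] using hb hz

-- The candidate for `ξ` is `φ = 1 - g ^ (-1 / p)`, with the power taken along a primitive of the
-- logarithmic derivative of `g`.
theorem exists_eq_one_sub_cpow_neg {g : ℂ → ℂ} {p : ℝ} (hp : 0 < p)
    (hg : DifferentiableOn ℂ g (ball 0 1)) (hne : ∀ z ∈ ball 0 1, g z ≠ 0) (h0 : g 0 = 1)
    (hre : ∀ z ∈ ball 0 1, -(p / 2) < (z * deriv g z / g z).re) {z : ℂ} (hz : z ∈ ball 0 1) :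
    ∃ ξ, ‖ξ‖ ≤ ‖z‖ ∧ g z = (1 - ξ) ^ (-p : ℂ) := by
  have hp' : (p : ℂ) ≠ 0 := ofReal_ne_zero.2 hp.ne'
  obtain ⟨L, hL0, hL⟩ := ((hg.deriv isOpen_ball).div hg hne).isExactOn_ball.with_val_at 0 0
  set u : ℂ → ℂ := fun z ↦ exp (-L z / p)
  have hu0 : u 0 = 1 := by simp [u, hL0]
  have hu_ne (w : ℂ) : u w ≠ 0 := exp_ne_zero _
  have hu : ∀ w ∈ ball 0 1, HasDerivAt u (u w * (logDeriv g w / -p)) w := fun w hw ↦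
    ((hL w hw).neg.div_const (p : ℂ)).cexp.congr_deriv (by rw [div_neg, ← neg_div]; rfl)
  have hu_diff : DifferentiableOn ℂ u (ball 0 1) :=
    fun w hw ↦ (hu w hw).differentiableAt.differentiableWithinAt
  have hφ_diff : DifferentiableOn ℂ (fun w ↦ 1 - u w) (ball 0 1) := hu_diff.const_sub 1
  have hφ0 : 1 - u 0 = 0 := by rw [hu0, sub_self]
  have hφ_lt : ∀ w ∈ ball 0 1, ‖1 - u w‖ < 1 := by
    refine fun w hw ↦ norm_lt_one_of_re_mul_deriv_div_one_sub hφ_diff hφ0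
      (fun w _ ↦ by simp [hu_ne w]) (fun w hw ↦ ?_) hw
    have hlog : w * deriv (fun w ↦ 1 - u w) w / (1 - (1 - u w)) =
        w * deriv g w / g w / (p : ℝ) := by
      rw [((hu w hw).const_sub 1).deriv, sub_sub_cancel, logDeriv_apply]
      field_simp [hu_ne w]
    rw [hlog, div_ofReal_re, lt_div_iff₀ hp]
    linarith [hre w hw]
  have hslit : ∀ w ∈ ball 0 1, u w ∈ slitPlane := fun w hw ↦ by
    simpa using one_sub_mem_slitPlane (mem_ball_zero_iff.2 (hφ_lt w hw))
  refine ⟨1 - u z, norm_le_norm_of_mapsTo_ball hφ_diff (fun w hw ↦ ?_) hφ0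
    (mem_ball_zero_iff.1 hz), ?_⟩
  · exact mem_closedBall_zero_iff.2 (hφ_lt w hw).le
  · rw [sub_sub_cancel]
    refine (cpow_const_eq_of_logDeriv_eq_div (neg_ne_zero.2 hp') hg hne h0 hu_diff hslit hu0
      (fun w hw ↦ ?_) hz).symm
    rw [logDeriv_apply, (hu w hw).deriv, mul_div_cancel_left₀ _ (hu_ne w)]

theorem kfun_zero (α : ℝ) : kfun α 0 = 0 := by
  simp [kfun]

theorem hasDerivAt_kfun (α : ℝ) {z : ℂ} (hz : 1 - z ∈ slitPlane) :
    HasDerivAt (kfun α) ((1 - z) ^ (-(2 - 2 * α : ℝ) : ℂ)) z := by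
  by_cases hα : α = 1 / 2
  · have hkfun : kfun α = fun z ↦ -log (1 - z) := funext fun z ↦ if_pos hα
    rw [hkfun]
    refine (((hasDerivAt_id z).const_sub 1).clog hz).neg.congr_deriv ?_
    norm_num [hα, cpow_neg_one, neg_div]
  · have hkfun : kfun α = fun z ↦ ((1 - z) ^ ((2 * α - 1 : ℝ) : ℂ) - 1) / ((1 - 2 * α : ℝ) : ℂ) :=
      funext fun z ↦ if_neg hα
    rw [hkfun]
    have hα' : ((1 - 2 * α : ℝ) : ℂ) ≠ 0 := ofReal_ne_zero.2 fun h ↦ hα (by linarith)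
    refine ((hasDerivAt_one_sub_cpow hz).sub_const 1).div_const _ |>.congr_deriv ?_
    rw [div_eq_iff hα', show ((2 * α - 1 : ℝ) : ℂ) - 1 = -(2 - 2 * α : ℝ) by push_cast; ring]
    push_cast
    ring

theorem differentiableOn_kfun (α : ℝ) : DifferentiableOn ℂ (kfun α) (ball 0 1) := fun _ hz ↦
  (hasDerivAt_kfun α (one_sub_mem_slitPlane hz)).differentiableAt.differentiableWithinAt

theorem dslope_zero_of_ne {f : ℂ → ℂ} (hf0 : f 0 = 0) {z : ℂ} (hz : z ≠ 0) :
    dslope f 0 z = f z / z := by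
  rw [dslope_of_ne _ hz, slope_def_field, hf0, sub_zero, sub_zero]

theorem dslope_kfun (α : ℝ) : dslope (kfun α) 0 = hfun α := by
  ext z
  obtain rfl | hz := eq_or_ne z 0
  · rw [dslope_same, (hasDerivAt_kfun α (by simp)).deriv, hfun, if_pos rfl]
    simp
  · rw [dslope_zero_of_ne (kfun_zero α) hz, hfun, if_neg hz]

theorem dslope_zero_add_mul_deriv {f : ℂ → ℂ} {z : ℂ} (hf : DifferentiableAt ℂ (dslope f 0) z)
    (hf0 : f 0 = 0) : dslope f 0 z + z * deriv (dslope f 0) z = deriv f z := by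
  have hmul : (fun z ↦ z * dslope f 0 z) = f := by
    funext z
    simpa [hf0] using sub_smul_dslope f 0 z
  have hderiv := (hasDerivAt_id' z).mul hf.hasDerivAt
  rw [one_mul] at hderiv
  rw [← hderiv.deriv]
  congr 1

theorem IsConvexOfOrder.dslope_mem_image_hfun {α : ℝ} {f : ℂ → ℂ} (hα : 1 / 2 ≤ α)
    (hf : IsConvexOfOrder α f) {z : ℂ} (hz : z ∈ unitDisk) : dslope f 0 z ∈ hfun α '' unitDisk := by
  obtain ⟨hfd, hf0, hf1, hfz⟩ := hf
  have hα1 : α < 1 := by simpa using (hfz 0 (mem_ball_self one_pos)).2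
  have hdslope {g : ℂ → ℂ} (hg : DifferentiableOn ℂ g (ball 0 1)) :
      DifferentiableOn ℂ (dslope g 0) (ball 0 1) :=
    (differentiableOn_dslope (ball_mem_nhds 0 one_pos)).2 hg
  have hode {g : ℂ → ℂ} (hg : DifferentiableOn ℂ g (ball 0 1)) (hg0 : g 0 = 0) :
      ∀ w ∈ ball 0 1, dslope g 0 w + w * deriv (dslope g 0) w = deriv g w := fun w hw ↦
    dslope_zero_add_mul_deriv ((hdslope hg).differentiableAt (isOpen_ball.mem_nhds hw)) hg0
  have hF := isConvexUnivalent_one_sub_cpow_neg (p := 2 - 2 * α) (by linarith) (by linarith)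
  rw [← dslope_kfun]
  refine hF.mem_image_of_add_mul_deriv (hdslope (differentiableOn_kfun α)) (fun w hw ↦ ?_)
    (hdslope hfd) (fun w hw ↦ ?_) hz
  · rw [hode (differentiableOn_kfun α) (kfun_zero α) w hw]
    exact (hasDerivAt_kfun α (one_sub_mem_slitPlane hw)).deriv
  · rw [hode hfd hf0 w hw]
    refine exists_eq_one_sub_cpow_neg (by linarith) (hfd.deriv isOpen_ball)
      (fun u hu ↦ (hfz u hu).1) hf1 (fun u hu ↦ ?_) hw
    have hre := (hfz u hu).2
    rw [add_re, one_re] at hre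
    linarith

/-! ### The boundary estimate for `α = 3/5` -/

theorem rpow_inv_natCast_le_affine {n : ℕ} (hn : n ≠ 0) {k x : ℝ} (hk : 0 < k) (hx : 0 ≤ x) :
    x ^ (n : ℝ)⁻¹ ≤ (1 + (k ^ n * x - 1) / n) / k := by
  have hroot : 0 ≤ k * x ^ (n : ℝ)⁻¹ := by positivity
  have hbernoulli := one_add_mul_sub_le_pow (by linarith : -1 ≤ k * x ^ (n : ℝ)⁻¹) n
  rw [mul_pow, Real.rpow_inv_natCast_pow hx hn] at hbernoulli
  have hn' : (0 : ℝ) < n := by positivity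
  rw [le_div_iff₀' hk, ← sub_le_iff_le_add', le_div_iff₀' hn']
  linarith

theorem sin_cos_pi_div_ten_le :
    Real.sin (π / 10) ≤ 0.30902 ∧ Real.cos (π / 10) ≤ 0.95106 := by
  have hcos_two : Real.cos (2 * (π / 10)) = (1 + √5) / 4 := by
    rw [← Real.cos_pi_div_five]
    ring_nf
  have hsqrt_lower : 2.23606 ≤ √5 := Real.le_sqrt_of_sq_le (by norm_num)
  have hsqrt_upper : √5 ≤ 2.23607 := Real.sqrt_le_iff.2 (by norm_num)
  constructor
  · refine le_of_sq_le_sq ?_ (by norm_num)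
    rw [Real.cos_two_mul, Real.cos_sq'] at hcos_two
    linarith
  · refine le_of_sq_le_sq ?_ (by norm_num)
    rw [Real.cos_two_mul] at hcos_two
    linarith

theorem sin_pi_div_ten_add_le {u : ℝ} (h0 : 0 ≤ u) (h1 : u ≤ 1) :
    Real.sin (π / 10 + u) ≤ 0.30902 * (1 - u ^ 2 / 2 + u ^ 4 * (5 / 96)) +
      0.95106 * (u - u ^ 3 / 6 + u ^ 5 / 100) := by
  have hu : |u| ≤ 1 := by rwa [abs_of_nonneg h0]
  have hcos := (abs_le.1 (Real.cos_bound hu)).2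
  have hsin := (abs_le.1 (Real.sin_bound hu)).2
  rw [abs_of_nonneg h0] at hcos hsin
  rw [Real.sin_add]
  refine add_le_add (mul_le_mul sin_cos_pi_div_ten_le.1 (by linarith) ?_ (by norm_num))
    (mul_le_mul sin_cos_pi_div_ten_le.2 (by linarith) ?_ (by norm_num))
  · exact (Real.cos_pos_of_le_one hu).le
  · exact Real.sin_nonneg_of_nonneg_of_le_pi h0 (by linarith [Real.pi_gt_three])

-- On each piece `[a, b]` of the cover, `k` is close to `t ^ (-1 / 5)`, where the affine bound is
-- sharp, and the difference of the two sides has nonnegative coefficients in the Bernstein basis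
-- `(t - a) ^ i * (b - t) ^ (6 - i)`.
theorem exists_affine_mul_taylor_le {t : ℝ} (h0 : 0 ≤ t) (h1 : t ≤ 1.08) :
    ∃ k : ℝ, 0 < k ∧ (1 + (k ^ 5 * t - 1) / 5) / k *
      (0.30902 * (1 - (9 / 10 * t) ^ 2 / 2 + (9 / 10 * t) ^ 4 * (5 / 96)) +
        0.95106 * (9 / 10 * t - (9 / 10 * t) ^ 3 / 6 + (9 / 10 * t) ^ 5 / 100)) ≤
      0.14865 + (t - t ^ 3 / 6) := by
  have B {a b : ℝ} (hab : a ≤ t ∧ t ≤ b) (i j : ℕ) : 0 ≤ (t - a) ^ i * (b - t) ^ j :=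
    mul_nonneg (pow_nonneg (sub_nonneg.2 hab.1) i) (pow_nonneg (sub_nonneg.2 hab.2) j)
  have hcover : (0 ≤ t ∧ t ≤ 0.09) ∨ (0.09 ≤ t ∧ t ≤ 0.12) ∨ (0.12 ≤ t ∧ t ≤ 0.17) ∨
      (0.17 ≤ t ∧ t ≤ 0.4) ∨ (0.4 ≤ t ∧ t ≤ 1.08) := by
    grind
  rcases hcover with ht | ht | ht | ht | ht
  · refine ⟨1.67, by norm_num, ?_⟩
    norm_num1
    linarith [B ht 0 6, B ht 1 5, B ht 2 4, B ht 3 3, B ht 4 2, B ht 5 1, B ht 6 0]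
  · refine ⟨1.56, by norm_num, ?_⟩
    norm_num1
    linarith [B ht 0 6, B ht 1 5, B ht 2 4, B ht 3 3, B ht 4 2, B ht 5 1, B ht 6 0]
  · refine ⟨1.5, by norm_num, ?_⟩
    norm_num1
    linarith [B ht 0 6, B ht 1 5, B ht 2 4, B ht 3 3, B ht 4 2, B ht 5 1, B ht 6 0]
  · refine ⟨1.35, by norm_num, ?_⟩
    norm_num1
    linarith [B ht 0 6, B ht 1 5, B ht 2 4, B ht 3 3, B ht 4 2, B ht 5 1, B ht 6 0]
  · refine ⟨1.05, by norm_num, ?_⟩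
    norm_num1
    linarith [B ht 0 6, B ht 1 5, B ht 2 4, B ht 3 3, B ht 4 2, B ht 5 1, B ht 6 0]

theorem two_mul_sin_sub_one_mul_sin_two_mul_le {φ : ℝ} (hφ : 0 ≤ Real.sin φ) :
    (2 * Real.sin φ - 1) * Real.sin (2 * φ) ≤ 5 * 0.14865 := by
  rw [Real.sin_two_mul]
  nlinarith [sq_nonneg (Real.sin φ ^ 2 - 0.7), sq_nonneg (Real.sin φ - 0.84),
    Real.sin_sq_add_cos_sq φ,
    sq_nonneg (2 * Real.sin φ - 1 - 2 * Real.sin φ * Real.cos φ)]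

-- The constant is just below `2 ^ (1 / 5) - 1 = 0.148698…`.
theorem rpow_mul_sin_le_add_sin {θ : ℝ} (hθ : θ ∈ Icc 0 π) :
    (2 * Real.sin (θ / 2)) ^ (1 / 5 : ℝ) * Real.sin (π / 10 + 9 / 10 * θ) ≤
      0.14865 + Real.sin θ := by
  obtain ⟨h0, hπ⟩ := hθ
  have hhalf : 0 ≤ Real.sin (θ / 2) :=
    Real.sin_nonneg_of_nonneg_of_le_pi (by linarith) (by linarith)
  have hhalf_le : 2 * Real.sin (θ / 2) ≤ θ := by linarith [Real.sin_le (by linarith : 0 ≤ θ / 2)]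
  have hsin : 0 ≤ Real.sin (π / 10 + 9 / 10 * θ) :=
    Real.sin_nonneg_of_nonneg_of_le_pi (by linarith [Real.pi_pos]) (by linarith)
  have hroot_nonneg : 0 ≤ (2 * Real.sin (θ / 2)) ^ (1 / 5 : ℝ) := by positivity
  have hroot {k : ℝ} (hk : 0 < k) : (2 * Real.sin (θ / 2)) ^ (1 / 5 : ℝ) ≤
      (1 + (k ^ 5 * (2 * Real.sin (θ / 2)) - 1) / 5) / k := by
    simpa using rpow_inv_natCast_le_affine (n := 5) (by norm_num) hk (mul_nonneg two_pos.le hhalf)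
  have hroot_one : (2 * Real.sin (θ / 2)) ^ (1 / 5 : ℝ) ≤ 1 + (2 * Real.sin (θ / 2) - 1) / 5 := by
    simpa using hroot one_pos
  rcases le_total θ 1.08 with hsmall | hlarge
  · obtain ⟨k, hk, hpoly⟩ := exists_affine_mul_taylor_le h0 hsmall
    have hroot_le : _ ≤ (1 + (k ^ 5 * θ - 1) / 5) / k := (hroot hk).trans (by gcongr)
    calc _ ≤ _ := mul_le_mul hroot_le (sin_pi_div_ten_add_le (by positivity) (by linarith)) hsin
          (hroot_nonneg.trans hroot_le)
      _ ≤ _ := hpoly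
      _ ≤ _ := by gcongr; exact Real.sin_ge_sub_cube h0
  rcases le_total θ (π / 2) with hle | hge
  · have hcos := Real.one_sub_sq_div_two_le_cos (x := π / 2 - θ)
    rw [Real.cos_pi_div_two_sub] at hcos
    have hsin_le := mul_le_of_le_one_right hroot_nonneg (Real.sin_le_one (π / 10 + 9 / 10 * θ))
    nlinarith [Real.pi_lt_d2, Real.pi_gt_d2]
  · have hmono : Real.sin (π / 10 + 9 / 10 * θ) ≤ Real.sin θ := by
      rw [← Real.sin_pi_sub, ← Real.sin_pi_sub θ]
      exact Real.sin_le_sin_of_le_of_le_pi_div_two (by linarith) (by linarith) (by linarith)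
    have hexcess := two_mul_sin_sub_one_mul_sin_two_mul_le hhalf
    rw [mul_div_cancel₀ _ two_ne_zero] at hexcess
    calc _ ≤ (1 + (2 * Real.sin (θ / 2) - 1) / 5) * Real.sin θ :=
          mul_le_mul hroot_one hmono hsin (hroot_nonneg.trans hroot_one)
      _ ≤ _ := by linarith

theorem sin_le_rpow_mul_sin {θ : ℝ} (hθ : θ ∈ Icc 0 π) :
    Real.sin θ ≤ (2 * Real.sin (θ / 2)) ^ (1 / 5 : ℝ) * Real.sin (π / 10 + 9 / 10 * θ) := by
  obtain ⟨h0, hπ⟩ := hθ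
  have hsin : 0 ≤ 2 * Real.sin (θ / 2) :=
    mul_nonneg two_pos.le (Real.sin_nonneg_of_nonneg_of_le_pi (by linarith) (by linarith))
  have hcos : 0 ≤ Real.cos (θ / 2) := Real.cos_nonneg_of_mem_Icc ⟨by linarith, by linarith⟩
  have hdouble : Real.sin θ = 2 * Real.sin (θ / 2) * Real.cos (θ / 2) := by
    rw [← Real.sin_two_mul, mul_div_cancel₀ _ two_ne_zero]
  have hsplit {x : ℝ} (hx : 0 ≤ x) : x ^ (1 / 5 : ℝ) * x ^ (4 / 5 : ℝ) = x := by
    rw [← Real.rpow_add_of_nonneg hx (by norm_num) (by norm_num)]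
    norm_num
  calc Real.sin θ
    _ = (2 * Real.sin (θ / 2)) ^ (1 / 5 : ℝ) * (2 * Real.sin (θ / 2)) ^ (4 / 5 : ℝ) *
          (Real.cos (θ / 2) ^ (1 / 5 : ℝ) * Real.cos (θ / 2) ^ (4 / 5 : ℝ)) := by
      rw [hsplit hsin, hsplit hcos, hdouble]
    _ = (2 * Real.sin (θ / 2)) ^ (1 / 5 : ℝ) *
          (Real.sin θ ^ (4 / 5 : ℝ) * Real.cos (θ / 2) ^ (1 / 5 : ℝ)) := by
      rw [hdouble, Real.mul_rpow hsin hcos]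
      ring
    _ = (2 * Real.sin (θ / 2)) ^ (1 / 5 : ℝ) *
          (Real.cos (θ - π / 2) ^ (4 / 5 : ℝ) * Real.cos (θ / 2) ^ (1 - 4 / 5 : ℝ)) := by
      rw [Real.cos_sub_pi_div_two, show (1 - 4 / 5 : ℝ) = 1 / 5 by norm_num]
    _ ≤ (2 * Real.sin (θ / 2)) ^ (1 / 5 : ℝ) *
          Real.cos (4 / 5 * (θ - π / 2) + (1 - 4 / 5) * (θ / 2)) := by
      gcongr
      exact cos_rpow_mul_cos_rpow_le ⟨by norm_num, by norm_num⟩ ⟨by linarith, by linarith⟩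
        ⟨by linarith, by linarith⟩
    _ = _ := by
      rw [← Real.cos_sub_pi_div_two (π / 10 + _)]
      ring_nf

theorem one_sub_exp_ofReal_mul_I (θ : ℝ) :
    1 - exp (θ * I) = (2 * Real.sin (θ / 2) : ℝ) * exp (((θ - π) / 2 : ℝ) * I) := by
  obtain ⟨φ, rfl⟩ : ∃ φ, θ = 2 * φ := ⟨θ / 2, by ring⟩
  rw [mul_div_cancel_left₀ _ two_ne_zero, show (2 * φ - π) / 2 = φ - π / 2 by ring]
  apply Complex.ext
  · rw [re_ofReal_mul, sub_re, exp_ofReal_mul_I_re, exp_ofReal_mul_I_re, one_re,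
      Real.cos_sub_pi_div_two, Real.cos_two_mul, Real.cos_sq']
    ring
  · rw [im_ofReal_mul, sub_im, exp_ofReal_mul_I_im, exp_ofReal_mul_I_im, one_im,
      Real.sin_sub_pi_div_two, Real.sin_two_mul]
    ring

theorem one_sub_exp_ofReal_mul_I_cpow {θ : ℝ} (hθ : θ ∈ Ioo 0 (2 * π)) (q : ℝ) :
    (1 - exp (θ * I)) ^ (q : ℂ) =
      ((2 * Real.sin (θ / 2)) ^ q : ℝ) * exp ((q * ((θ - π) / 2) : ℝ) * I) := by
  have hsin : 0 < 2 * Real.sin (θ / 2) :=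
    mul_pos two_pos (Real.sin_pos_of_pos_of_lt_pi (by linarith [hθ.1]) (by linarith [hθ.2]))
  have harg : ((θ - π) / 2 : ℝ) ∈ Ioc (-π) π :=
    ⟨by linarith [hθ.1, Real.pi_pos], by linarith [hθ.2, Real.pi_pos]⟩
  have hlog : log (exp (((θ - π) / 2 : ℝ) * I)) = ((θ - π) / 2 : ℝ) * I :=
    log_exp (by simpa using harg.1) (by simpa using harg.2)
  rw [one_sub_exp_ofReal_mul_I,
    cpow_def_of_ne_zero (mul_ne_zero (ofReal_ne_zero.2 hsin.ne') (exp_ne_zero _)),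
    log_ofReal_mul hsin (exp_ne_zero _), hlog, add_mul, exp_add, Real.rpow_def_of_pos hsin]
  push_cast
  ring_nf

theorem kfun_three_fifths (z : ℂ) : kfun (3 / 5) z = 5 * (1 - (1 - z) ^ (1 / 5 : ℂ)) := by
  rw [kfun, if_neg (by norm_num)]
  norm_num
  ring

theorem continuousOn_kfun_three_fifths : ContinuousOn (kfun (3 / 5)) (closedBall 0 1) := by
  intro z hz
  have hre : 0 ≤ (1 - z).re := by
    simpa using (re_le_norm z).trans (mem_closedBall_zero_iff.1 hz)
  have hpow : ContinuousAt (fun w : ℂ ↦ (1 - w) ^ (1 / 5 : ℂ)) z :=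
    ContinuousAt.comp (f := fun w : ℂ ↦ 1 - w)
      (continuousAt_cpow_const_of_re_pos (Or.inl hre) (by norm_num)) (by fun_prop)
  rw [funext kfun_three_fifths]
  exact (continuousAt_const.mul (continuousAt_const.sub hpow)).continuousWithinAt

theorem im_exp_mul_kfun_three_fifths {θ : ℝ} (hθ : θ ∈ Ioo 0 π) :
    (exp (-θ * I) * kfun (3 / 5) (exp (θ * I))).im =
      5 * ((2 * Real.sin (θ / 2)) ^ (1 / 5 : ℝ) * Real.sin (π / 10 + 9 / 10 * θ) -
        Real.sin θ) := by
  have hcpow := one_sub_exp_ofReal_mul_I_cpow ⟨hθ.1, by linarith [hθ.2, Real.pi_pos]⟩ (1 / 5)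
  have hrotate : exp (-θ * I) * kfun (3 / 5) (exp (θ * I)) =
      (5 : ℝ) * (exp ((-θ : ℝ) * I) - ((2 * Real.sin (θ / 2)) ^ (1 / 5 : ℝ) : ℝ) *
        exp ((-(π / 10 + 9 / 10 * θ) : ℝ) * I)) := by
    have hexp : exp ((-(π / 10 + 9 / 10 * θ) : ℝ) * I) =
        exp ((-θ : ℝ) * I) * exp ((1 / 5 * ((θ - π) / 2) : ℝ) * I) := by
      rw [← exp_add]
      congr 1
      push_cast
      ring
    have hfifth : (1 / 5 : ℂ) = (1 / 5 : ℝ) := by norm_num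
    rw [kfun_three_fifths, hfifth, hcpow, hexp, ofReal_neg, ofReal_ofNat]
    ring
  rw [hrotate, im_ofReal_mul, sub_im, im_ofReal_mul, exp_ofReal_mul_I_im, exp_ofReal_mul_I_im,
    Real.sin_neg, Real.sin_neg]
  ring

theorem im_exp_mul_kfun_three_fifths_mem_Icc {θ : ℝ} (hθ : θ ∈ Ioo 0 π) :
    (exp (-θ * I) * kfun (3 / 5) (exp (θ * I))).im ∈ Icc 0 (5 * 0.14865) := by
  rw [im_exp_mul_kfun_three_fifths hθ]
  have hθ' := Ioo_subset_Icc_self hθ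
  exact ⟨by linarith [sin_le_rpow_mul_sin hθ'], by linarith [rpow_mul_sin_le_add_sin hθ']⟩

theorem kfun_conj (α : ℝ) {z : ℂ} (hz : (1 - z).arg ≠ π) :
    kfun α (conj z) = conj (kfun α z) := by
  have hsub : 1 - conj z = conj (1 - z) := by rw [map_sub, map_one]
  rw [kfun, kfun, hsub]
  split_ifs
  · rw [log_conj _ hz, map_neg]
  · rw [conj_cpow _ _ hz, conj_ofReal, map_div₀, map_sub, map_one, conj_ofReal]

theorem abs_im_kfun_three_fifths_div_le_of_im_pos {z : ℂ} (hz : ‖z‖ = 1) (him : 0 < z.im) :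
    |(kfun (3 / 5) z / z).im| ≤ 5 * 0.14865 := by
  have harg : z.arg ∈ Ioo 0 π :=
    ⟨(arg_nonneg_iff.2 him.le).lt_of_ne' fun h ↦ him.ne' (arg_eq_zero_iff.1 h).2,
      arg_lt_pi_iff.2 (Or.inr him.ne')⟩
  have hexp : exp (z.arg * I) = z := by simpa [hz] using norm_mul_exp_arg_mul_I z
  have hmem := im_exp_mul_kfun_three_fifths_mem_Icc harg
  rw [neg_mul, exp_neg, hexp, inv_mul_eq_div] at hmem
  rw [abs_of_nonneg hmem.1]
  exact hmem.2

theorem abs_im_kfun_three_fifths_div_le {z : ℂ} (hz : ‖z‖ = 1) :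
    |(kfun (3 / 5) z / z).im| ≤ 5 * 0.14865 := by
  have harg : (1 - z).arg ≠ π := (arg_lt_pi_iff.2 (Or.inl (by simpa [hz] using re_le_norm z))).ne
  have hconj : kfun (3 / 5) (conj z) / conj z = conj (kfun (3 / 5) z / z) := by
    rw [kfun_conj _ harg, map_div₀]
  rcases lt_trichotomy z.im 0 with him | him | him
  · have hbound := abs_im_kfun_three_fifths_div_le_of_im_pos (z := conj z) (by simpa using hz)
      (by simpa using him)
    rwa [hconj, conj_im, abs_neg] at hbound
  · rw [conj_eq_iff_im.2 him, eq_comm, conj_eq_iff_im] at hconj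
    norm_num [hconj]
  · exact abs_im_kfun_three_fifths_div_le_of_im_pos hz him

-- The maximum modulus principle for `exp (-I * h)`, whose modulus is `exp (im h)`.
theorem im_le_of_forall_mem_sphere_im_le {h : ℂ → ℂ} {c : ℂ} {r M : ℝ}
    (hd : DiffContOnCl ℂ h (ball c r)) (hM : ∀ z ∈ sphere c r, (h z).im ≤ M) {z : ℂ}
    (hz : z ∈ ball c r) : (h z).im ≤ M := by
  have hnorm (w : ℂ) : ‖exp (-I * h w)‖ = Real.exp (h w).im := by simp [norm_exp]
  have hexp : DiffContOnCl ℂ (fun w ↦ exp (-I * h w)) (ball c r) :=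
    ⟨(hd.1.const_mul _).cexp, (continuousOn_const.mul hd.2).cexp⟩
  have hmax := norm_le_of_forall_mem_frontier_norm_le isBounded_ball hexp (C := Real.exp M)
    (fun w hw ↦ by
      rw [hnorm]
      exact Real.exp_le_exp.2 (hM w (frontier_ball_subset_sphere hw))) (subset_closure hz)
  rw [hnorm] at hmax
  exact Real.exp_le_exp.1 hmax

theorem abs_im_hfun_three_fifths_le {z : ℂ} (hz : z ∈ ball 0 1) :
    |(hfun (3 / 5) z).im| ≤ 5 * 0.14865 := by
  have hdiff : DiffContOnCl ℂ (hfun (3 / 5)) (ball 0 1) := by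
    rw [← dslope_kfun]
    refine ⟨(differentiableOn_dslope (ball_mem_nhds 0 one_pos)).2 (differentiableOn_kfun _), ?_⟩
    rw [closure_ball 0 one_ne_zero]
    exact (continuousOn_dslope (closedBall_mem_nhds 0 one_pos)).2
      ⟨continuousOn_kfun_three_fifths, (hasDerivAt_kfun _ (by simp)).differentiableAt⟩
  have hsphere (w : ℂ) (hw : w ∈ sphere 0 1) : |(hfun (3 / 5) w).im| ≤ 5 * 0.14865 := by
    rw [hfun, if_neg (ne_of_mem_sphere hw one_ne_zero)]
    exact abs_im_kfun_three_fifths_div_le (mem_sphere_zero_iff_norm.1 hw)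
  refine abs_le'.2 ⟨?_, ?_⟩
  · exact im_le_of_forall_mem_sphere_im_le hdiff (fun w hw ↦ (abs_le'.1 (hsphere w hw)).1) hz
  · exact im_le_of_forall_mem_sphere_im_le hdiff.neg (fun w hw ↦ (abs_le'.1 (hsphere w hw)).2) hz

theorem five_mul_lt_five_mul_two_rpow_sub_one :
    5 * 0.14865 < 5 * ((2 : ℝ) ^ ((1 : ℝ) / 5) - 1) := by
  have hroot : (1.14865 : ℝ) < 2 ^ ((1 : ℝ) / 5) := by
    rw [one_div, Real.lt_rpow_inv_iff_of_pos (by norm_num) (by norm_num) (by norm_num)]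
    norm_num
  linarith

theorem kfun_three_fifths_neg_one :
    -kfun (3 / 5) (-1) = (5 * (2 ^ ((1 : ℝ) / 5) - 1) : ℝ) := by
  have hpow : (1 - -1 : ℂ) ^ (1 / 5 : ℂ) = (2 ^ ((1 : ℝ) / 5) : ℝ) := by
    rw [ofReal_cpow zero_le_two]
    norm_num
  rw [kfun_three_fifths, hpow]
  push_cast
  ring

/-- for `f ∈ K(3/5)`, `|Im(f(z)/z)| < 5(2^{1/5} - 1)` on `𝔻 \ {0}`; indeed
`M(3/5) = sup_{0<θ<π} Im(e^{-iθ} k_{3/5}(e^{iθ})) < 5(2^{1/5} - 1) = -k_{3/5}(-1)`. -/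
theorem im_bound_threeFifths (f : ℂ → ℂ) (hf : IsConvexOfOrder (3 / 5) f) :
    (∀ z ∈ unitDisk, z ≠ 0 →
      |(f z / z).im| < 5 * (2 ^ ((1 : ℝ) / 5) - 1)) ∧
    sSup {y : ℝ | ∃ θ ∈ Set.Ioo (0 : ℝ) Real.pi,
        y = (Complex.exp (-(θ : ℂ) * Complex.I) *
          kfun (3 / 5) (Complex.exp ((θ : ℂ) * Complex.I))).im}
      < 5 * (2 ^ ((1 : ℝ) / 5) - 1) ∧
    -kfun (3 / 5) (-1) = (((5 * (2 ^ ((1 : ℝ) / 5) - 1) : ℝ)) : ℂ) := by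
  refine ⟨fun z hz hz0 ↦ ?_, ?_, kfun_three_fifths_neg_one⟩
  · obtain ⟨w, hw, hwz⟩ := hf.dslope_mem_image_hfun (by norm_num) hz
    rw [← dslope_zero_of_ne hf.2.1 hz0, ← hwz]
    exact (abs_im_hfun_three_fifths_le hw).trans_lt five_mul_lt_five_mul_two_rpow_sub_one
  · have hone : (1 : ℝ) ∈ Ioo 0 π := ⟨one_pos, by linarith [Real.pi_gt_three]⟩
    refine lt_of_le_of_lt (csSup_le ⟨_, 1, hone, rfl⟩ ?_) five_mul_lt_five_mul_two_rpow_sub_one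
    rintro _ ⟨θ, hθ, rfl⟩
    exact (im_exp_mul_kfun_three_fifths_mem_Icc hθ).2
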